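/- Let R be a ring and X a chain complex of left R-modules with a filtration (F^p)_{p∈ℤ}, and let ι^p : F^p → X denote the inclusion morphisms. Fix p, q ∈ ℤ and set n = p + q. If there exists r₀ ≥ 1 such that H_n(ι^{p+r₀−1}) : H_n(F^{p+r₀−1}) → H_n(X) is an isomorphism, then (⋃_{r≥0} J^r_{p,q}) + F^{p−1}_n = (Im ∂_{n+1} ∩ F^p_n) + F^{p−1}_n as submodules of X_n. -/

import Mathlib

open Submodule

variable {R : Type*} [Ring R]

section FiltrationSetup

variable (X : ℤ → Type*) [∀ n, AddCommGroup (X n)] [∀ n, Module R (X n)]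

/-- The submodule `I^r_{p,q}` of `X_n` (where `n = p + q`):
`I^r_{p,q} = (∂_n)⁻¹(F^{p−r}_{n−1}) ∩ F^p_n`. -/
def filtI (d : ∀ i j : ℤ, X i →ₗ[R] X j) (F : ℤ → ∀ n : ℤ, Submodule R (X n))
    (r p n : ℤ) : Submodule R (X n) :=
  Submodule.comap (d n (n - 1)) (F (p - r) (n - 1)) ⊓ F p n

/-- The submodule `J^r_{p,q}` of `X_n` (where `n = p + q`):
`J^r_{p,q} = ∂_{n+1}(F^{p+r−1}_{n+1}) ∩ F^p_n`. -/
def filtJ (d : ∀ i j : ℤ, X i →ₗ[R] X j) (F : ℤ → ∀ n : ℤ, Submodule R (X n))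
    (r p n : ℤ) : Submodule R (X n) :=
  Submodule.map (d (n + 1) n) (F (p + r - 1) (n + 1)) ⊓ F p n

/-- The `m`-th homology of a ℤ-indexed complex `(Y, e)` (with the homological-complex
convention `e i j : Y i →ₗ Y j`, nonzero only for `j = i − 1`):
`H_m = Ker(e m (m−1)) / Im(e (m+1) m)`. -/
abbrev homologyAt (Y : ℤ → Type*) [∀ n, AddCommGroup (Y n)] [∀ n, Module R (Y n)]
    (e : ∀ i j : ℤ, Y i →ₗ[R] Y j) (m : ℤ) :=
  ↥(LinearMap.ker (e m (m - 1))) ⧸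
    Submodule.comap (LinearMap.ker (e m (m - 1))).subtype (LinearMap.range (e (m + 1) m))

variable (d : ∀ i j : ℤ, X i →ₗ[R] X j) (F : ℤ → ∀ n : ℤ, Submodule R (X n))
variable (hsub : ∀ p i j : ℤ, ∀ x : X i, x ∈ F p i → d i j x ∈ F p j)

/-- The differentials of the subcomplex `F^p`, given by restricting those of `X`. -/
def subD (p i j : ℤ) : ↥(F p i) →ₗ[R] ↥(F p j) :=
  (d i j).restrict (fun x hx => hsub p i j x hx)

/-- The inclusion `Ker(∂_n^{F^p}) → Ker(∂_n^X)`. -/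
def inclKer (p n : ℤ) :
    ↥(LinearMap.ker (subD X d F hsub p n (n - 1))) →ₗ[R] ↥(LinearMap.ker (d n (n - 1))) :=
  LinearMap.codRestrict _
    ((F p n).subtype.comp (LinearMap.ker (subD X d F hsub p n (n - 1))).subtype)
    (fun x => by
      have hx : subD X d F hsub p n (n - 1) x.1 = 0 := x.2
      have h' : d n (n - 1) (x.1 : X n) = 0 := congrArg Subtype.val hx
      simpa [LinearMap.mem_ker] using h')

/-- The map `H_n(ι^p) : H_n(F^p) → H_n(X)` induced on homology by the inclusion
`ι^p : F^p → X`. -/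
def homologyMapIncl (p n : ℤ) :
    homologyAt (fun m => ↥(F p m)) (subD X d F hsub p) n →ₗ[R] homologyAt X d n :=
  Submodule.mapQ _ _ (inclKer X d F hsub p n)
    (by
      rintro x ⟨y, hy⟩
      exact ⟨(y : X (n + 1)), congrArg Subtype.val hy⟩)

end FiltrationSetup

/-- If `H_n(F^s) → H_n(X)` is injective, every boundary of `X` lying in `F^s_n` is already a
boundary of `F^s`. -/
theorem range_inf_le_map_of_injective_homologyMapIncl
    (X : ℤ → Type*) [∀ n, AddCommGroup (X n)] [∀ n, Module R (X n)]
    (d : ∀ i j : ℤ, X i →ₗ[R] X j)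
    (hdd : ∀ i j k : ℤ, ∀ x : X i, d j k (d i j x) = 0)
    (F : ℤ → ∀ n : ℤ, Submodule R (X n))
    (hsub : ∀ p i j : ℤ, ∀ x : X i, x ∈ F p i → d i j x ∈ F p j)
    (s n : ℤ) (hinj : Function.Injective (homologyMapIncl X d F hsub s n)) :
    LinearMap.range (d (n + 1) n) ⊓ F s n ≤ Submodule.map (d (n + 1) n) (F s (n + 1)) := by
  rintro x ⟨⟨y, rfl⟩, hx⟩
  let z : LinearMap.ker (subD X d F hsub s n (n - 1)) :=
    ⟨⟨d (n + 1) n y, hx⟩, Subtype.ext (hdd _ _ _ y)⟩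
  have hz : homologyMapIncl X d F hsub s n (Submodule.Quotient.mk z) = 0 :=
    (Submodule.Quotient.mk_eq_zero _).2 ⟨y, rfl⟩
  obtain ⟨w, hw⟩ :=
    (Submodule.Quotient.mk_eq_zero _).1 ((map_eq_zero_iff _ hinj).1 hz)
  exact ⟨w, w.2, congrArg Subtype.val hw⟩

/-- Let `R` be a ring and `X` a chain complex of left `R`-modules with a
filtration `(F p)ₚ` by subcomplexes, and let `ι^p : F^p → X` denote the inclusions.  Fix
`p q : ℤ` and set `n = p + q`.  If there exists `r₀ ≥ 1` such that
`H_n(ι^{p+r₀−1}) : H_n(F^{p+r₀−1}) → H_n(X)` is an isomorphism, then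
`(⋃_{r≥0} J^r_{p,q}) + F^{p−1}_n = (Im ∂_{n+1} ∩ F^p_n) + F^{p−1}_n` as submodules of `X_n`. -/
theorem iSup_filtJ_sup_eq
    (X : ℤ → Type*) [∀ n, AddCommGroup (X n)] [∀ n, Module R (X n)]
    (d : ∀ i j : ℤ, X i →ₗ[R] X j)
    (hshape : ∀ i j : ℤ, j ≠ i - 1 → d i j = 0)
    (hdd : ∀ i j k : ℤ, ∀ x : X i, d j k (d i j x) = 0)
    (F : ℤ → ∀ n : ℤ, Submodule R (X n))
    (hmono : ∀ p n : ℤ, F (p - 1) n ≤ F p n)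
    (hsub : ∀ p i j : ℤ, ∀ x : X i, x ∈ F p i → d i j x ∈ F p j)
    (p q : ℤ)
    (hiso : ∃ r₀ : ℤ, 1 ≤ r₀ ∧
      Function.Bijective (homologyMapIncl X d F hsub (p + r₀ - 1) (p + q))) :
    (⨆ r : ℕ, filtJ X d F (r : ℤ) p (p + q)) ⊔ F (p - 1) (p + q)
      = (LinearMap.range (d (p + q + 1) (p + q)) ⊓ F p (p + q)) ⊔ F (p - 1) (p + q) := by
  obtain ⟨r₀, hr₀, hinj, -⟩ := hiso
  lift r₀ to ℕ using by omega
  have hle : F p (p + q) ≤ F (p + r₀ - 1) (p + q) :=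
    monotone_int_of_le_succ (f := fun s => F s (p + q))
      (fun s => by simpa using hmono (s + 1) (p + q)) (by omega)
  refine le_antisymm (sup_le_sup_right (iSup_le fun r => ?_) _) (sup_le_sup_right ?_ _)
  · exact inf_le_inf_right _ LinearMap.map_le_range
  · refine le_trans (le_inf ?_ inf_le_right) (le_iSup (fun r : ℕ => filtJ X d F r p (p + q)) r₀)
    exact (inf_le_inf_left _ hle).trans
      (range_inf_le_map_of_injective_homologyMapIncl X d hdd F hsub _ _ hinj)
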